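/- arXiv:1706.00980 — 6 statements merged into one kernel-verified Lean document; each statement's English description precedes it below -/
import Mathlib

section
/- Let β > 0 and let λ ∈ [−1, 1]. For all real numbers x, y with βxy < 1 one has β·(λ ∘ x)·(λ ∘ y) < 1 (so the right-hand side below is defined) and λ ∘ (x ⊕ y) = (λ ∘ x) ⊕ (λ ∘ y). -/
/-- Generalized addition `x ⊕ y = (x + y)/(1 - β x y)`. -/
noncomputable def oplus (β x y : ℝ) : ℝ := (x + y) / (1 - β * x * y)

/-- Generalized multiplication by a scalar `λ ∘ x = (1/√β) tan (λ arctan (√β x))`. -/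
noncomputable def circ (β l x : ℝ) : ℝ :=
  (1 / Real.sqrt β) * Real.tan (l * Real.arctan (Real.sqrt β * x))

/-!
The substitution `x = tan θ / √β` turns `⊕` into addition of angles, and by definition `λ ∘ ·` into
`θ ↦ λ θ`; hence the identity is distributivity of multiplication over addition. The bound
`β x y < 1` says that the angles of `x` and `y` add up to an angle of `(-π/2, π/2)`, a property
that multiplication by `λ ∈ [-1, 1]` preserves.
-/

open Real

section Trigonometry

variable {a b : ℝ}

theorem tan_mul_tan_lt_one_iff (ha : 0 < cos a) (hb : 0 < cos b) :
    tan a * tan b < 1 ↔ 0 < cos (a + b) := by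
  rw [tan_eq_sin_div_cos, tan_eq_sin_div_cos, div_mul_div_comm, div_lt_one (mul_pos ha hb),
    cos_add, sub_pos]

theorem tan_add_of_cos_ne_zero (ha : cos a ≠ 0) (hb : cos b ≠ 0) :
    tan (a + b) = (tan a + tan b) / (1 - tan a * tan b) :=
  tan_add' ⟨cos_ne_zero_iff.mp ha, cos_ne_zero_iff.mp hb⟩

theorem cos_mul_pos_of_abs_le_one {l θ : ℝ} (hl : |l| ≤ 1) (hθ : |θ| < π / 2) :
    0 < cos (l * θ) := by
  have hlθ : |l * θ| < π / 2 :=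
    calc |l * θ| = |l| * |θ| := abs_mul l θ
      _ ≤ |θ| := mul_le_of_le_one_left (abs_nonneg θ) hl
      _ < π / 2 := hθ
  exact cos_pos_of_mem_Ioo (abs_lt.mp hlθ)

end Trigonometry

/-- The angle `θ ∈ (-π/2, π/2)` of a real number `x = tan θ / √β`. -/
noncomputable def scaledArctan (β x : ℝ) : ℝ := arctan (√β * x)

/-- The real number `tan θ / √β` with angle `θ`; the prefactor is written as in `circ`. -/
noncomputable def scaledTan (β θ : ℝ) : ℝ := 1 / √β * tan θ

theorem circ_eq_scaledTan (β l x : ℝ) : circ β l x = scaledTan β (l * scaledArctan β x) := rfl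

theorem abs_scaledArctan_lt (β x : ℝ) : |scaledArctan β x| < π / 2 :=
  abs_lt.mpr (arctan_mem_Ioo (√β * x))

section Rescaling

variable {β : ℝ}

theorem scaledArctan_oplus (hβ : 0 ≤ β) {x y : ℝ} (hxy : β * x * y < 1) :
    scaledArctan β (oplus β x y) = scaledArctan β x + scaledArctan β y := by
  have hprod : √β * x * (√β * y) = β * x * y := by
    rw [mul_mul_mul_comm, mul_self_sqrt hβ, mul_assoc]
  simp only [scaledArctan, oplus]
  rw [arctan_add (hprod.trans_lt hxy), hprod, ← mul_add, mul_div_assoc]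

theorem mul_scaledTan_mul_scaledTan (hβ : 0 < β) (a b : ℝ) :
    β * scaledTan β a * scaledTan β b = tan a * tan b := by
  have hinv : β * (1 / √β * (1 / √β)) = 1 := by
    rw [div_mul_div_comm, mul_self_sqrt hβ.le, one_mul, mul_one_div_cancel hβ.ne']
  unfold scaledTan
  linear_combination tan a * tan b * hinv

theorem scaledTan_add (hβ : 0 < β) {a b : ℝ} (ha : cos a ≠ 0) (hb : cos b ≠ 0) :
    scaledTan β (a + b) = oplus β (scaledTan β a) (scaledTan β b) := by
  rw [oplus, mul_scaledTan_mul_scaledTan hβ, scaledTan, scaledTan, scaledTan,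
    tan_add_of_cos_ne_zero ha hb, ← mul_add, mul_div_assoc]

end Rescaling

theorem circ_oplus (β l x y : ℝ) (hβ : 0 < β) (hl : l ∈ Set.Icc (-1 : ℝ) 1)
    (hxy : β * x * y < 1) :
    β * circ β l x * circ β l y < 1 ∧
    circ β l (oplus β x y) = oplus β (circ β l x) (circ β l y) := by
  have hcos (z : ℝ) : 0 < cos (l * scaledArctan β z) :=
    cos_mul_pos_of_abs_le_one (abs_le.mpr hl) (abs_scaledArctan_lt β z)
  have hangle : l * scaledArctan β (oplus β x y) =
      l * scaledArctan β x + l * scaledArctan β y := by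
    rw [scaledArctan_oplus hβ.le hxy, mul_add]
  simp only [circ_eq_scaledTan]
  constructor
  · rw [mul_scaledTan_mul_scaledTan hβ, tan_mul_tan_lt_one_iff (hcos x) (hcos y), ← hangle]
    exact hcos (oplus β x y)
  · rw [hangle, scaledTan_add hβ (hcos x).ne' (hcos y).ne']
end

section
/- Let β > 0, let f : ℝ → ℂ be differentiable at the point p ∈ ℝ. Then the generalized difference quotient converges: lim_{η → 0} (f(p ⊕ η) − f(p))/η = (1 + βp²)·f′(p), where p ⊕ η = (p + η)/(1 − βpη) (which is defined for all sufficiently small η). -/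
open Filter Topology

theorem oplus_zero (β x : ℝ) : oplus β x 0 = x := by
  simp [oplus]

theorem hasDerivAt_oplus_right {β x y : ℝ} (hxy : 1 - β * x * y ≠ 0) :
    HasDerivAt (oplus β x) ((1 + β * x ^ 2) / (1 - β * x * y) ^ 2) y := by
  have hnum : HasDerivAt (fun η ↦ x + η) 1 y := (hasDerivAt_id y).const_add x
  have hden : HasDerivAt (fun η ↦ 1 - β * x * η) (-(β * x)) y := by
    simpa using ((hasDerivAt_id y).const_mul (β * x)).const_sub 1
  exact (hnum.div hden hxy).congr_deriv (by ring)

theorem hasDerivAt_oplus_zero (β x : ℝ) : HasDerivAt (oplus β x) (1 + β * x ^ 2) 0 := by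
  simpa using hasDerivAt_oplus_right (β := β) (x := x) (y := 0) (by simp)

theorem generalized_deriv_general {E : Type*} [NormedAddCommGroup E] [NormedSpace ℝ E]
    (β : ℝ) (f : ℝ → E) (p : ℝ) (f' : E) (hf : HasDerivAt f f' p) :
    Tendsto (fun η : ℝ ↦ η⁻¹ • (f (oplus β p η) - f p)) (𝓝[≠] 0)
      (𝓝 ((1 + β * p ^ 2) • f')) := by
  have hcomp : HasDerivAt (f ∘ oplus β p) ((1 + β * p ^ 2) • f') 0 :=
    HasDerivAt.scomp 0 (by rwa [oplus_zero]) (hasDerivAt_oplus_zero β p)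
  simpa only [Function.comp_apply, zero_add, oplus_zero] using hcomp.tendsto_slope_zero

theorem generalized_deriv (β : ℝ) (hβ : 0 < β) (f : ℝ → ℂ) (p : ℝ) (f' : ℂ)
    (hf : HasDerivAt f f' p) :
    Tendsto (fun η : ℝ => (f (oplus β p η) - f p) / (η : ℂ)) (𝓝[≠] 0)
      (𝓝 (((1 + β * p ^ 2 : ℝ) : ℂ) * f')) := by
  simpa only [Complex.real_smul, Complex.ofReal_inv, ← div_eq_inv_mul] using
    generalized_deriv_general β f p f' hf
end

section
/- Let β > 0 and let μ be the measure on ℝ with density dμ(p) = dp/(1 + βp²) with respect to Lebesgue measure. Then μ is invariant under generalized translations: for every η ∈ ℝ and every function f ∈ L¹(ℝ, μ), the function p ↦ f(p ⊕ η) (defined for almost every p, since p ⊕ η is defined except at the single point p = 1/(βη) when η ≠ 0) is μ-integrable and ∫_ℝ f(p ⊕ η) dμ(p) = ∫_ℝ f(p) dμ(p). -/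
open MeasureTheory

/-- The measure `dμ(p) = dp / (1 + β p²)` on ℝ. -/
noncomputable def gmeasure (β : ℝ) : Measure ℝ :=
  volume.withDensity (fun p => ENNReal.ofReal (1 / (1 + β * p ^ 2)))

/-!
Away from its pole, `T p = p ⊕ η` is a bijection between conull sets, with inverse `q ↦ q ⊕ (-η)`
and derivative `T' p = (1 + β η²) / (1 - β p η)²`, which is positive as soon as `1 + β η² > 0`. The
identity `1 + β (T p)² = T' p * (1 + β p²)` then says that `T` carries `dp / (1 + β p²)` to itself.

For `β < 0` the density of `gmeasure β` is cut off to `0` outside the interval `|p| < 1 / √(-β)`, on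
which `⊕` is the relativistic addition of velocities.
-/

section ChangeOfVariables

variable {E : Type*} [NormedAddCommGroup E] [NormedSpace ℝ E] [FiniteDimensional ℝ E]
  [MeasurableSpace E] [BorelSpace E]

theorem measurePreserving_withDensity_of_hasFDerivWithinAt {μ : Measure E} [μ.IsAddHaarMeasure]
    {T : E → E} {T' : E → E →L[ℝ] E} {s : Set E} {ρ₁ ρ₂ : E → ENNReal}
    (hT : Measurable T) (hs : MeasurableSet s) (hs_ae : ∀ᵐ x ∂μ, x ∈ s)
    (himage_ae : ∀ᵐ y ∂μ, y ∈ T '' s) (hinj : Set.InjOn T s)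
    (hT' : ∀ x ∈ s, HasFDerivWithinAt T (T' x) s x)
    (hρ : ∀ x ∈ s, ENNReal.ofReal |(T' x).det| * ρ₂ (T x) = ρ₁ x) :
    MeasurePreserving T (μ.withDensity ρ₁) (μ.withDensity ρ₂) := by
  refine ⟨hT, Measure.ext fun A hA => ?_⟩
  have hpre : MeasurableSet (T ⁻¹' A ∩ s) := (hT hA).inter hs
  have hsource : (T ⁻¹' A ∩ s : Set E) =ᵐ[μ] T ⁻¹' A :=
    inter_ae_eq_left_of_ae_eq_univ (Filter.eventuallyEq_univ.2 hs_ae)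
  have htarget : (A ∩ T '' s : Set E) =ᵐ[μ] A :=
    inter_ae_eq_left_of_ae_eq_univ (Filter.eventuallyEq_univ.2 himage_ae)
  calc (μ.withDensity ρ₁).map T A
      = ∫⁻ x in T ⁻¹' A, ρ₁ x ∂μ := by
        rw [Measure.map_apply hT hA, withDensity_apply _ (hT hA)]
    _ = ∫⁻ x in T ⁻¹' A ∩ s, ρ₁ x ∂μ := (setLIntegral_congr hsource).symm
    _ = ∫⁻ x in T ⁻¹' A ∩ s, ENNReal.ofReal |(T' x).det| * ρ₂ (T x) ∂μ :=
        setLIntegral_congr_fun hpre fun x hx => (hρ x hx.2).symm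
    _ = ∫⁻ y in T '' (T ⁻¹' A ∩ s), ρ₂ y ∂μ :=
        (lintegral_image_eq_lintegral_abs_det_fderiv_mul μ hpre
          (fun x hx => (hT' x hx.2).mono Set.inter_subset_right)
          (hinj.mono Set.inter_subset_right) ρ₂).symm
    _ = ∫⁻ y in A ∩ T '' s, ρ₂ y ∂μ := by
        rw [Set.inter_comm, Set.image_inter_preimage, Set.inter_comm]
    _ = ∫⁻ y in A, ρ₂ y ∂μ := setLIntegral_congr htarget
    _ = μ.withDensity ρ₂ A := (withDensity_apply _ hA).symm

end ChangeOfVariables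

section GeneralizedTranslation

variable {β η p : ℝ}

/-- The set of those `p` at which `p ⊕ η` is defined. It is everything but the pole `1 / (β η)`, or
all of `ℝ` when `β η = 0`; elsewhere `oplus β p η` has the value `0`. -/
def oplusDomain (β η : ℝ) : Set ℝ := {p | 1 - β * p * η ≠ 0}

theorem measurableSet_oplusDomain (β η : ℝ) : MeasurableSet (oplusDomain β η) :=
  (isOpen_ne_fun (by fun_prop) continuous_const).measurableSet

theorem subsingleton_compl_oplusDomain (β η : ℝ) : (oplusDomain β η)ᶜ.Subsingleton := by
  intro p hp q hq
  have hp : 1 - β * p * η = 0 := not_not.1 hp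
  have hq : 1 - β * q * η = 0 := not_not.1 hq
  calc p = p * (β * q * η) := by linear_combination p * hq
    _ = q := by linear_combination -q * hp

theorem ae_mem_oplusDomain (ν : Measure ℝ) [NullSingletonClass ν] (β η : ℝ) :
    ∀ᵐ p ∂ν, p ∈ oplusDomain β η :=
  (subsingleton_compl_oplusDomain β η).measure_zero ν

theorem measurable_oplus_right (β η : ℝ) : Measurable fun p => oplus β p η := by
  unfold oplus
  fun_prop

theorem hasDerivAt_oplus (hp : p ∈ oplusDomain β η) :
    HasDerivAt (fun p => oplus β p η) ((1 + β * η ^ 2) / (1 - β * p * η) ^ 2) p := by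
  have hnum : HasDerivAt (fun p : ℝ => p + η) 1 p := (hasDerivAt_id p).add_const η
  have hden : HasDerivAt (fun p : ℝ => 1 - β * p * η) (-(β * 1 * η)) p :=
    (((hasDerivAt_id p).const_mul β).mul_const η).const_sub 1
  exact (hnum.fun_div hden hp).congr_deriv (by ring)

theorem oplus_mul_one_sub (hp : p ∈ oplusDomain β η) :
    oplus β p η * (1 - β * p * η) = p + η :=
  div_mul_cancel₀ _ hp

theorem one_add_mul_oplus_sq (hp : p ∈ oplusDomain β η) :
    1 + β * oplus β p η ^ 2 = (1 + β * η ^ 2) / (1 - β * p * η) ^ 2 * (1 + β * p ^ 2) := by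
  rw [div_mul_eq_mul_div, eq_div_iff (pow_ne_zero 2 hp)]
  linear_combination β * (oplus β p η * (1 - β * p * η) + (p + η)) * oplus_mul_one_sub hp

theorem one_sub_mul_oplus_mul_neg (hp : p ∈ oplusDomain β η) :
    1 - β * oplus β p η * -η = (1 + β * η ^ 2) / (1 - β * p * η) := by
  rw [eq_div_iff hp]
  linear_combination β * η * oplus_mul_one_sub hp

theorem oplus_mem_oplusDomain_neg (hη : 1 + β * η ^ 2 ≠ 0) (hp : p ∈ oplusDomain β η) :
    oplus β p η ∈ oplusDomain β (-η) :=
  (one_sub_mul_oplus_mul_neg hp).trans_ne (div_ne_zero hη hp)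

theorem oplus_oplus_neg (hη : 1 + β * η ^ 2 ≠ 0) (hp : p ∈ oplusDomain β η) :
    oplus β (oplus β p η) (-η) = p := by
  have hnum : oplus β p η + -η = p * ((1 + β * η ^ 2) / (1 - β * p * η)) := by
    rw [mul_div_assoc', eq_div_iff hp]
    linear_combination oplus_mul_one_sub hp
  rw [oplus, one_sub_mul_oplus_mul_neg hp, hnum, mul_div_cancel_right₀ _ (div_ne_zero hη hp)]

theorem bijOn_oplus (hη : 1 + β * η ^ 2 ≠ 0) :
    Set.BijOn (fun p => oplus β p η) (oplusDomain β η) (oplusDomain β (-η)) := by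
  have hη' : 1 + β * (-η) ^ 2 ≠ 0 := by rwa [neg_sq]
  refine Set.InvOn.bijOn (f' := fun q => oplus β q (-η))
    ⟨fun p hp => oplus_oplus_neg hη hp, fun q hq => ?_⟩
    (fun p hp => oplus_mem_oplusDomain_neg hη hp) (fun q hq => ?_)
  · simpa only [neg_neg] using oplus_oplus_neg hη' hq
  · simpa only [neg_neg] using oplus_mem_oplusDomain_neg hη' hq

theorem deriv_oplus_mul_density (hη : 1 + β * η ^ 2 ≠ 0) (hp : p ∈ oplusDomain β η) :
    (1 + β * η ^ 2) / (1 - β * p * η) ^ 2 * (1 / (1 + β * oplus β p η ^ 2)) =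
      1 / (1 + β * p ^ 2) := by
  rw [one_add_mul_oplus_sq hp, one_div, mul_inv,
    mul_inv_cancel_left₀ (div_ne_zero hη (pow_ne_zero 2 hp)), one_div]

theorem measurePreserving_oplus (hη : 0 < 1 + β * η ^ 2) :
    MeasurePreserving (fun p => oplus β p η) (gmeasure β) (gmeasure β) := by
  have hbij := bijOn_oplus hη.ne'
  refine measurePreserving_withDensity_of_hasFDerivWithinAt (measurable_oplus_right β η)
    (measurableSet_oplusDomain β η) (ae_mem_oplusDomain volume β η) ?_ hbij.injOn
    (fun p hp => (hasDerivAt_oplus hp).hasFDerivAt.hasFDerivWithinAt) fun p hp => ?_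
  · rw [hbij.image_eq]
    exact ae_mem_oplusDomain volume β (-η)
  · have hderiv_nonneg : 0 ≤ (1 + β * η ^ 2) / (1 - β * p * η) ^ 2 := by positivity
    rw [ContinuousLinearMap.det_toSpanSingleton, abs_of_nonneg hderiv_nonneg,
      ← ENNReal.ofReal_mul hderiv_nonneg, deriv_oplus_mul_density hη.ne' hp]

end GeneralizedTranslation

theorem gmeasure_translation_invariant_general {E : Type*} [NormedAddCommGroup E]
    [NormedSpace ℝ E] [CompleteSpace E] {β η : ℝ} (hη : 0 < 1 + β * η ^ 2) {f : ℝ → E}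
    (hf : Integrable f (gmeasure β)) :
    Integrable (fun p => f (oplus β p η)) (gmeasure β) ∧
    ∫ p, f (oplus β p η) ∂(gmeasure β) = ∫ p, f p ∂(gmeasure β) := by
  have hT := measurePreserving_oplus hη
  have hf_map : Integrable f ((gmeasure β).map fun p => oplus β p η) := hT.map_eq.symm ▸ hf
  refine ⟨hT.integrable_comp_of_integrable hf, ?_⟩
  rw [← integral_map hT.aemeasurable hf_map.aestronglyMeasurable, hT.map_eq]

theorem gmeasure_translation_invariant (β : ℝ) (hβ : 0 < β) (η : ℝ)
    (f : ℝ → ℂ) (hf : Integrable f (gmeasure β)) :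
    Integrable (fun p => f (oplus β p η)) (gmeasure β) ∧
    ∫ p, f (oplus β p η) ∂(gmeasure β) = ∫ p, f p ∂(gmeasure β) := by
  exact gmeasure_translation_invariant_general (by positivity) hf
end

section
/- Let β > 0, ħ > 0, λ ∈ [0, 1]. Let φ : ℝ → ℂ be bounded and continuously differentiable with (1 + βp²)·|φ′(p)| bounded on ℝ. Then for every p ∈ ℝ the generalized λ-Wigner function of φ has the probabilistic marginal property: lim_{R → ∞} (1/(2πħ)) ∫_{−R}^{R} W_λ(φ, φ)(q, p) dq = |φ(p)|². -/
open MeasureTheory Filter Topology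

/-- Generalized subtraction `x ⊖ y = x ⊕ (-y)`. -/
noncomputable def ominus (β x y : ℝ) : ℝ := oplus β x (-y)

/-- The generalized λ-Wigner transform. -/
noncomputable def Wig (β hb l : ℝ) (φ ψ : ℝ → ℂ) (q p : ℝ) : ℂ :=
  ∫ p', (starRingEnd ℂ) (φ (ominus β p (circ β (1 - l) p')))
      * ψ (oplus β p (circ β l p'))
      * Complex.exp (Complex.I / hb * q *
          (Real.arctan (Real.sqrt β * p') / Real.sqrt β)) ∂(gmeasure β)

/-!
In the coordinate `u = arctan (√β p') / √β` the operation `⊕` is addition, `∘` is multiplication and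
`μ` is Lebesgue measure on the interval `|u| < π / (2√β)`. Hence `W_λ(φ, ψ)(·, p)` is, up to
scaling, the inverse Fourier transform of a function of `u` supported on that interval, whose value
at `u = 0` is `conj (φ p) * ψ p`, and the marginal is pointwise Fourier inversion at `u = 0`, which
holds by Dini's criterion (local integrability of the slope). To prove the criterion, subtract a
multiple of a Gaussian, for which inversion is explicit, so that the function vanishes at the point.
Then `f x / x` is integrable, its Fourier transform is up to a constant factor a primitive of that
of `f`, and by the Riemann–Lebesgue lemma this primitive vanishes at infinity.
-/

open scoped FourierTransform ComplexConjugate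

section Slope

variable {E : Type*} [NormedAddCommGroup E] [NormedSpace ℝ E] {μ : Measure ℝ} {f : ℝ → E} {a : ℝ}

lemma integrableAtFilter_slope_of_isBigO_sub [IsLocallyFiniteMeasure μ]
    (hfm : AEStronglyMeasurable f μ) (hf : (fun x => f x - f a) =O[𝓝 a] fun x => x - a) :
    IntegrableAtFilter (slope f a) (𝓝 a) μ := by
  have hbdd : slope f a =O[𝓝 a] fun _ => (1 : ℝ) := by
    obtain ⟨C, hC⟩ := hf.bound
    refine .of_bound |C| (hC.mono fun x hx => ?_)
    rw [slope_def_module, norm_smul, norm_inv, norm_one, mul_one, inv_mul_eq_div]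
    refine div_le_of_le_mul₀ (norm_nonneg _) (abs_nonneg _) (hx.trans ?_)
    gcongr
    exact le_abs_self C
  have hmeas : AEStronglyMeasurable (slope f a) μ := by
    simp only [slope_fun_def, vsub_eq_sub]
    exact AEStronglyMeasurable.smul (by fun_prop) (hfm.sub aestronglyMeasurable_const)
  exact hbdd.integrableAtFilter hmeas.stronglyMeasurableAtFilter
    (μ.finiteAt_nhds a |>.integrableAtFilter_of_tendsto
      stronglyMeasurable_const.stronglyMeasurableAtFilter tendsto_const_nhds)

lemma integrable_slope (hf : Integrable f μ) (ha : f a = 0)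
    (hs : IntegrableAtFilter (slope f a) (𝓝 a) μ) : Integrable (slope f a) μ := by
  have hslope : slope f a = fun x => (x - a)⁻¹ • f x := by
    simp [slope_fun_def, ha]
  obtain ⟨s, hsa, hs⟩ := hs
  obtain ⟨δ, hδ, hball⟩ := Metric.mem_nhds_iff.mp hsa
  have hfar : IntegrableOn (slope f a) (Metric.ball a δ)ᶜ μ := by
    refine (hf.norm.const_mul δ⁻¹).integrableOn.mono' ?_ ?_
    · rw [hslope]
      exact AEStronglyMeasurable.smul (by fun_prop) hf.aestronglyMeasurable.restrict
    · filter_upwards [ae_restrict_mem measurableSet_ball.compl] with x hx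
      have hδx : δ ≤ ‖x - a‖ := by simpa [dist_eq_norm] using hx
      rw [hslope, norm_smul, norm_inv]
      gcongr
  rw [← integrableOn_univ, ← Set.union_compl_self (Metric.ball a δ)]
  exact (hs.mono_set hball).union hfar

end Slope

section FourierInversion

lemma continuous_fourier_of_integrable {V E : Type*} [NormedAddCommGroup V] [InnerProductSpace ℝ V]
    [FiniteDimensional ℝ V] [MeasurableSpace V] [BorelSpace V] [NormedAddCommGroup E]
    [NormedSpace ℂ E] {f : V → E} (hf : Integrable f) : Continuous (𝓕 f) :=
  VectorFourier.fourierIntegral_continuous Real.continuous_fourierChar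
    (innerSL ℝ).continuous₂ hf

lemma fourier_gaussian_self :
    𝓕 (fun x : ℝ => Complex.exp (-Real.pi * x ^ 2)) =
      fun x : ℝ => Complex.exp (-Real.pi * x ^ 2) := by
  simpa using fourier_gaussian_pi (b := 1) (by simp)

lemma integrable_gaussian : Integrable fun x : ℝ => Complex.exp (-Real.pi * x ^ 2) :=
  integrable_cexp_neg_mul_sq (by simp [Real.pi_pos])

lemma integral_gaussian_eq_one : ∫ x : ℝ, Complex.exp (-Real.pi * x ^ 2) = 1 := by
  simpa [Real.fourier_real_eq] using congrFun fourier_gaussian_self 0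

variable {E : Type*} [NormedAddCommGroup E] [NormedSpace ℂ E] {f : ℝ → E}

lemma hasDerivAt_fourier_slope (hf : Integrable f) (h0 : f 0 = 0) (hs : Integrable (slope f 0))
    (w : ℝ) : HasDerivAt (𝓕 (slope f 0)) ((-2 * Real.pi * Complex.I) • 𝓕 f w) w := by
  have hmul (x : ℝ) : x • slope f 0 x = f x := by
    simpa [h0] using sub_smul_slope f 0 x
  convert Real.hasDerivAt_fourier hs (by simpa only [hmul] using hf) w using 1
  simp only [mul_smul _ (Complex.ofReal _), Complex.coe_smul, hmul]
  exact (congrFun (VectorFourier.fourierIntegral_const_smul _ _ _ f _) w).symm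

variable [CompleteSpace E]

lemma tendsto_intervalIntegral_fourier_zero (hf : Integrable f) (h0 : f 0 = 0)
    (hs : IntegrableAtFilter (slope f 0) (𝓝 0)) :
    Tendsto (fun R : ℝ => ∫ w in (-R)..R, 𝓕 f w) atTop (𝓝 0) := by
  have hpi : (-2 * Real.pi * Complex.I : ℂ) ≠ 0 := by simp [Real.pi_ne_zero]
  have hprim (w : ℝ) :
      HasDerivAt ((-2 * Real.pi * Complex.I : ℂ)⁻¹ • 𝓕 (slope f 0)) (𝓕 f w) w := by
    simpa only [inv_smul_smul₀ hpi] using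
      (hasDerivAt_fourier_slope hf h0 (integrable_slope hf h0 hs) w).const_smul
        (-2 * Real.pi * Complex.I : ℂ)⁻¹
  have hFTC (R : ℝ) := intervalIntegral.integral_eq_sub_of_hasDerivAt (fun w _ => hprim w)
    ((continuous_fourier_of_integrable hf).intervalIntegrable (-R) R)
  have hRL := (Real.zero_at_infty_fourier (slope f 0)).const_smul
    (-2 * Real.pi * Complex.I : ℂ)⁻¹
  rw [cocompact_eq_atBot_atTop, tendsto_sup, smul_zero] at hRL
  simpa only [hFTC, sub_zero] using! hRL.2.sub (hRL.1.comp tendsto_neg_atTop_atBot)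

lemma tendsto_intervalIntegral_fourier_gaussian_smul (v : E) :
    Tendsto (fun R : ℝ => ∫ w in (-R)..R, 𝓕 (fun x : ℝ => Complex.exp (-Real.pi * x ^ 2) • v) w)
      atTop (𝓝 v) := by
  have hfourier (w : ℝ) : 𝓕 (fun x : ℝ => Complex.exp (-Real.pi * x ^ 2) • v) w =
      Complex.exp (-Real.pi * w ^ 2) • v := by
    rw [← congrFun fourier_gaussian_self w]
    simp only [Real.fourier_real_eq, ← smul_assoc, integral_smul_const]
  simp only [hfourier]
  simpa only [integral_smul_const, integral_gaussian_eq_one, one_smul, id_eq] using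
    intervalIntegral_tendsto_integral (integrable_gaussian.smul_const v)
      tendsto_neg_atTop_atBot tendsto_id

lemma tendsto_intervalIntegral_fourier (hf : Integrable f)
    (hs : IntegrableAtFilter (slope f 0) (𝓝 0)) :
    Tendsto (fun R : ℝ => ∫ w in (-R)..R, 𝓕 f w) atTop (𝓝 (f 0)) := by
  set g : ℝ → E := fun x => Complex.exp (-Real.pi * x ^ 2) • f 0 with hg
  have hgi : Integrable g := integrable_gaussian.smul_const _
  have hgs : IntegrableAtFilter (slope g 0) (𝓝 0) := by
    have hgd : DifferentiableAt ℝ g 0 := by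
      have hofReal : DifferentiableAt ℝ (fun x : ℝ => (x : ℂ)) 0 :=
        Complex.ofRealCLM.differentiableAt
      fun_prop
    exact integrableAtFilter_slope_of_isBigO_sub hgi.aestronglyMeasurable hgd.isBigO_sub
  have hslope : slope (f - g) 0 = slope f 0 - slope g 0 := by
    ext x
    simp only [slope_def_module, Pi.sub_apply, ← smul_sub, sub_sub_sub_comm]
  have hdiff := tendsto_intervalIntegral_fourier_zero (hf.sub hgi) (by simp [hg])
    (hslope ▸ hs.sub hgs)
  have hadd : 𝓕 f = 𝓕 (f - g) + 𝓕 g := by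
    conv_lhs => rw [← sub_add_cancel f g]
    exact VectorFourier.fourierIntegral_add Real.continuous_fourierChar
      (innerSL ℝ).continuous₂ (hf.sub hgi) hgi
  rw [← zero_add (f 0)]
  refine (hdiff.add (tendsto_intervalIntegral_fourier_gaussian_smul (f 0))).congr fun R => ?_
  rw [hadd]
  exact (intervalIntegral.integral_add
    ((continuous_fourier_of_integrable (hf.sub hgi)).intervalIntegrable _ _)
    ((continuous_fourier_of_integrable hgi).intervalIntegrable _ _)).symm

theorem tendsto_intervalIntegral_fourierChar_smul_fourier {a : ℝ} (hf : Integrable f)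
    (hs : IntegrableAtFilter (slope f a) (𝓝 a)) :
    Tendsto (fun R : ℝ => ∫ w in (-R)..R, Real.fourierChar (w * a) • 𝓕 f w) atTop (𝓝 (f a)) := by
  have hslope : slope (fun x => f (x + a)) 0 = slope f a ∘ (· + a) := by
    ext x
    simp [slope_def_module]
  have hs' : IntegrableAtFilter (slope (fun x => f (x + a)) 0) (𝓝 0) := by
    rw [hslope, ← (measurableEmbedding_addRight a).integrableAtFilter_map_iff,
      map_add_right_eq_self, map_add_right_nhds_zero]
    exact hs
  have htranslate (w : ℝ) : 𝓕 (fun x => f (x + a)) w = Real.fourierChar (w * a) • 𝓕 f w :=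
    congrFun (VectorFourier.fourierIntegral_comp_add_right _ _ _ f a) w
  simpa [htranslate] using tendsto_intervalIntegral_fourier (hf.comp_add_right a) hs'

end FourierInversion

section ArctanCoordinate

/-- The coordinate `u = arctan (√β x) / √β` on `ℝ`, in which `⊕` becomes addition, `l ∘ ·` becomes
multiplication by `l` and `gmeasure β` becomes Lebesgue measure on an interval. -/
noncomputable def arctanCoord (β x : ℝ) : ℝ :=
  Real.arctan (Real.sqrt β * x) / Real.sqrt β

/-- The translate `p ⊕ (tan (√β u) / √β)` of `p` by the point with coordinate `arctanCoord β` equal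
to `u`. -/
noncomputable def arctanTranslate (β p u : ℝ) : ℝ :=
  oplus β p (1 / Real.sqrt β * Real.tan (Real.sqrt β * u))

variable {β : ℝ}

lemma sqrt_mul_arctanCoord (hβ : 0 < β) (x : ℝ) :
    Real.sqrt β * arctanCoord β x = Real.arctan (Real.sqrt β * x) :=
  mul_div_cancel₀ _ (Real.sqrt_pos.mpr hβ).ne'

lemma oplus_circ (hβ : 0 < β) (l p x : ℝ) :
    oplus β p (circ β l x) = arctanTranslate β p (l * arctanCoord β x) := by
  rw [arctanTranslate, circ, mul_left_comm, sqrt_mul_arctanCoord hβ]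

lemma ominus_circ (hβ : 0 < β) (l p x : ℝ) :
    ominus β p (circ β l x) = arctanTranslate β p (-l * arctanCoord β x) := by
  rw [ominus, ← oplus_circ hβ, circ, circ, neg_mul, Real.tan_neg, mul_neg]

lemma hasDerivAt_arctanCoord (hβ : 0 < β) (x : ℝ) :
    HasDerivAt (arctanCoord β) (1 / (1 + β * x ^ 2)) x := by
  have hs : Real.sqrt β ≠ 0 := (Real.sqrt_pos.mpr hβ).ne'
  refine (((hasDerivAt_id x).const_mul _).arctan.div_const _).congr_deriv ?_
  rw [id, mul_pow, Real.sq_sqrt hβ.le, mul_one, mul_div_cancel_right₀ _ hs]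

lemma arctanCoord_injective (hβ : 0 < β) : Function.Injective (arctanCoord β) := by
  have hs : Real.sqrt β ≠ 0 := (Real.sqrt_pos.mpr hβ).ne'
  intro x y hxy
  exact mul_left_cancel₀ hs (Real.arctan_injective ((div_left_inj' hs).mp hxy))

lemma range_arctanCoord (hβ : 0 < β) :
    Set.range (arctanCoord β) = Metric.ball 0 (Real.pi / (2 * Real.sqrt β)) := by
  have hs : 0 < Real.sqrt β := Real.sqrt_pos.mpr hβ
  ext u
  have hball : u ∈ Metric.ball 0 (Real.pi / (2 * Real.sqrt β)) ↔
      Real.sqrt β * u ∈ Set.Ioo (-(Real.pi / 2)) (Real.pi / 2) := by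
    rw [mem_ball_zero_iff, Real.norm_eq_abs, ← div_div, lt_div_iff₀' hs, Set.mem_Ioo, ← abs_lt,
      abs_mul, abs_of_pos hs]
  rw [hball]
  constructor
  · rintro ⟨x, rfl⟩
    rw [sqrt_mul_arctanCoord hβ]
    exact Real.arctan_mem_Ioo _
  · intro hu
    refine ⟨Real.tan (Real.sqrt β * u) / Real.sqrt β, ?_⟩
    rw [arctanCoord, mul_div_cancel₀ _ hs.ne', Real.arctan_tan hu.1 hu.2,
      mul_div_cancel_left₀ _ hs.ne']

lemma measurePreserving_arctanCoord (hβ : 0 < β) :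
    MeasurePreserving (arctanCoord β) (gmeasure β)
      (volume.restrict (Metric.ball 0 (Real.pi / (2 * Real.sqrt β)))) where
  measurable := by unfold arctanCoord; fun_prop
  map_eq := by
    have h := map_withDensity_abs_det_fderiv_eq_addHaar volume nullMeasurableSet_univ
      (fun x _ => (hasDerivAt_arctanCoord hβ x).hasFDerivAt.hasFDerivWithinAt)
      (arctanCoord_injective hβ).injOn
    have habs (x : ℝ) : |1 / (1 + β * x ^ 2)| = 1 / (1 + β * x ^ 2) :=
      abs_of_nonneg (by positivity)
    simpa only [ContinuousLinearMap.det_toSpanSingleton, habs, Measure.restrict_univ,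
      Set.image_univ, range_arctanCoord hβ] using! h

lemma measurableEmbedding_arctanCoord (hβ : 0 < β) : MeasurableEmbedding (arctanCoord β) :=
  (measurePreserving_arctanCoord hβ).measurable.measurableEmbedding (arctanCoord_injective hβ)

lemma arctanTranslate_zero (β p : ℝ) : arctanTranslate β p 0 = p := by
  simp [arctanTranslate, oplus]

lemma measurable_arctanTranslate (β p : ℝ) : Measurable (arctanTranslate β p) := by
  unfold arctanTranslate oplus
  simp only [Real.tan_eq_sin_div_cos]
  fun_prop

lemma differentiableAt_arctanTranslate_zero (β p : ℝ) :
    DifferentiableAt ℝ (arctanTranslate β p) 0 := by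
  have htan : DifferentiableAt ℝ (fun u => Real.tan (Real.sqrt β * u)) 0 :=
    DifferentiableAt.comp (g := Real.tan) 0 (by simp [Real.differentiableAt_tan]) (by fun_prop)
  unfold arctanTranslate oplus
  exact ((htan.const_mul _).const_add p).div (((htan.const_mul _).const_mul _).const_sub 1)
    (by simp)

end ArctanCoordinate

section Wigner

/-- The integrand of the Wigner transform without its phase, as a function of the coordinate
`u = arctanCoord β p'` of the integration variable. -/
noncomputable def wignerAmplitude (β l : ℝ) (φ ψ : ℝ → ℂ) (p u : ℝ) : ℂ :=
  conj (φ (arctanTranslate β p (-(1 - l) * u))) * ψ (arctanTranslate β p (l * u))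

variable {φ ψ : ℝ → ℂ} {p : ℝ}

lemma wignerAmplitude_zero (β l : ℝ) (φ ψ : ℝ → ℂ) (p : ℝ) :
    wignerAmplitude β l φ ψ p 0 = conj (φ p) * ψ p := by
  simp only [wignerAmplitude, mul_zero, arctanTranslate_zero]

lemma differentiableAt_wignerAmplitude_zero (β l : ℝ) (hφ : DifferentiableAt ℝ φ p)
    (hψ : DifferentiableAt ℝ ψ p) : DifferentiableAt ℝ (wignerAmplitude β l φ ψ p) 0 := by
  have htranslate (c : ℝ) : DifferentiableAt ℝ (fun u => arctanTranslate β p (c * u)) 0 :=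
    DifferentiableAt.comp (g := arctanTranslate β p) 0
      (by simpa using differentiableAt_arctanTranslate_zero β p) (by fun_prop)
  have hcomp {χ : ℝ → ℂ} (hχ : DifferentiableAt ℝ χ p) (c : ℝ) :
      DifferentiableAt ℝ (fun u => χ (arctanTranslate β p (c * u))) 0 :=
    DifferentiableAt.comp (g := χ) 0 (by simpa [arctanTranslate_zero] using hχ) (htranslate c)
  exact (Complex.conjCLE.differentiableAt.comp 0 (hcomp hφ _)).mul (hcomp hψ l)

lemma integrableOn_wignerAmplitude (β l : ℝ) (hφ : Measurable φ) (hψ : Measurable ψ)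
    (hφb : ∃ C, ∀ x, ‖φ x‖ ≤ C) (hψb : ∃ C, ∀ x, ‖ψ x‖ ≤ C) (p : ℝ) {μ : Measure ℝ} {s : Set ℝ}
    (hs : μ s ≠ ⊤) : IntegrableOn (wignerAmplitude β l φ ψ p) s μ := by
  obtain ⟨A, hA⟩ := hφb
  obtain ⟨B, hB⟩ := hψb
  have hmeas : Measurable (wignerAmplitude β l φ ψ p) :=
    (Complex.continuous_conj.measurable.comp
      (hφ.comp ((measurable_arctanTranslate β p).comp (measurable_const_mul _)))).mul
        (hψ.comp ((measurable_arctanTranslate β p).comp (measurable_const_mul _)))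
  refine Measure.integrableOn_of_bounded (M := A * B) hs hmeas.aestronglyMeasurable
    (ae_of_all _ fun u => ?_)
  rw [wignerAmplitude, norm_mul, RCLike.norm_conj]
  exact mul_le_mul (hA _) (hB _) (norm_nonneg _) ((norm_nonneg _).trans (hA 0))

lemma Wig_eq_fourierInv {β : ℝ} (hβ : 0 < β) (hb l : ℝ) (φ ψ : ℝ → ℂ) (q p : ℝ) :
    Wig β hb l φ ψ q p =
      𝓕⁻ ((Metric.ball 0 (Real.pi / (2 * Real.sqrt β))).indicator (wignerAmplitude β l φ ψ p))
        (q / (2 * Real.pi * hb)) := by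
  have hcoord : Wig β hb l φ ψ q p = ∫ u in Metric.ball 0 (Real.pi / (2 * Real.sqrt β)),
      wignerAmplitude β l φ ψ p u * Complex.exp (Complex.I / hb * q * u) := by
    rw [← (measurePreserving_arctanCoord hβ).integral_comp (measurableEmbedding_arctanCoord hβ)]
    simp only [Wig, wignerAmplitude, ominus_circ hβ, oplus_circ hβ, arctanCoord,
      Complex.ofReal_div]
  have hphase (u : ℝ) : Complex.I / hb * q * u =
      ↑(2 * Real.pi * inner ℝ u (q / (2 * Real.pi * hb))) * Complex.I := by
    have hpi : (Real.pi : ℂ) ≠ 0 := Complex.ofReal_ne_zero.mpr Real.pi_ne_zero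
    simp only [RCLike.inner_apply, conj_trivial]
    push_cast
    field_simp
  rw [hcoord, ← integral_indicator measurableSet_ball, Real.fourierInv_eq']
  refine integral_congr_ae (ae_of_all _ fun u => ?_)
  simp only [hphase, smul_eq_mul, mul_comm _ (Complex.exp _), Set.indicator_mul_right]

theorem wigner_marginal_general (β hb l : ℝ) (hβ : 0 < β) (hhb : 0 < hb)
    (hφ : Measurable φ) (hψ : Measurable ψ) (hφb : ∃ C, ∀ x, ‖φ x‖ ≤ C)
    (hψb : ∃ C, ∀ x, ‖ψ x‖ ≤ C) (hφd : DifferentiableAt ℝ φ p) (hψd : DifferentiableAt ℝ ψ p) :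
    Tendsto (fun R : ℝ => (1 / (2 * Real.pi * hb)) * ∫ q in (-R)..R, Wig β hb l φ ψ q p) atTop
      (𝓝 (conj (φ p) * ψ p)) := by
  have hc : 0 < 2 * Real.pi * hb := by positivity
  have hr : 0 < Real.pi / (2 * Real.sqrt β) := by positivity
  set f := (Metric.ball 0 (Real.pi / (2 * Real.sqrt β))).indicator (wignerAmplitude β l φ ψ p)
  have hf0 : f 0 = conj (φ p) * ψ p := by
    rw [← wignerAmplitude_zero β l]
    exact Set.indicator_of_mem (Metric.mem_ball_self hr) _
  have hfi : Integrable f := (integrable_indicator_iff measurableSet_ball).mpr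
    (integrableOn_wignerAmplitude β l hφ hψ hφb hψb p measure_ball_lt_top.ne)
  have hfd : DifferentiableAt ℝ f 0 :=
    (differentiableAt_wignerAmplitude_zero β l hφd hψd).congr_of_eventuallyEq
      (Set.eqOn_indicator.eventuallyEq_of_mem (Metric.ball_mem_nhds 0 hr))
  have hinv : Tendsto (fun R : ℝ => ∫ w in (-R)..R, 𝓕⁻ f w) atTop (𝓝 (f 0)) := by
    simpa [Real.fourierInv_eq_fourier_neg] using tendsto_intervalIntegral_fourierChar_smul_fourier
      hfi (integrableAtFilter_slope_of_isBigO_sub hfi.aestronglyMeasurable hfd.isBigO_sub)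
  rw [← hf0]
  refine (hinv.comp (tendsto_id.atTop_div_const hc)).congr fun R => ?_
  simp only [Wig_eq_fourierInv hβ]
  have hscale := intervalIntegral.inv_smul_integral_comp_div (a := -R) (b := R) (𝓕⁻ f)
    (2 * Real.pi * hb)
  simpa [f, neg_div] using hscale.symm

end Wigner

theorem wigner_marginal (β hb l : ℝ) (hβ : 0 < β) (hhb : 0 < hb)
    (hl : l ∈ Set.Icc (0 : ℝ) 1) (φ : ℝ → ℂ)
    (hφb : ∃ C, ∀ p, ‖φ p‖ ≤ C) (hφ : ContDiff ℝ 1 φ)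
    (hφ'b : ∃ C, ∀ p, (1 + β * p ^ 2) * ‖deriv φ p‖ ≤ C) (p : ℝ) :
    Tendsto (fun R : ℝ => (1 / (2 * Real.pi * hb)) *
        ∫ q in (-R)..R, Wig β hb l φ φ q p) atTop
      (𝓝 ((‖φ p‖ ^ 2 : ℝ) : ℂ)) := by
  simpa only [Complex.conj_mul', Complex.ofReal_pow] using
    wigner_marginal_general β hb l hβ hhb hφ.continuous.measurable hφ.continuous.measurable hφb hφb
      (hφ.differentiable one_ne_zero p) (hφ.differentiable one_ne_zero p)
end

section
/- Let β > 0 and a ∈ ℝ. Then ∫_ℝ e^{−i·a·arctan(√β p)} / (1 + βp²) dp = (π/√β)·sinc(a/2), where sinc(x) = sin(πx)/(πx) for x ≠ 0 and sinc(0) = 1, and arctan is the principal branch with values in (−π/2, π/2). -/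
open MeasureTheory

/-- The normalized cardinal sine: `sinc x = sin (π x) / (π x)` for `x ≠ 0`, `sinc 0 = 1`. -/
noncomputable def sinc (x : ℝ) : ℝ :=
  if x = 0 then 1 else Real.sin (Real.pi * x) / (Real.pi * x)

/-!
Since `d (arctan x) = dx / (1 + x²)`, the substitution `θ = arctan (√β p)` maps `ℝ` bijectively
onto `(-π/2, π/2)` and absorbs the denominator up to the factor `1/√β`. What remains is the Fourier
transform of the indicator function of an interval, which is a cardinal sine.
-/

theorem sinc_eq_real_sinc_pi_mul (x : ℝ) : sinc x = Real.sinc (Real.pi * x) := by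
  simp [sinc, Real.sinc_apply, Real.pi_ne_zero]

section ArctanSubstitution

variable {E : Type*} [NormedAddCommGroup E] [NormedSpace ℝ E]

theorem integral_inv_one_add_sq_smul_comp_arctan (g : ℝ → E) :
    ∫ x : ℝ, (1 + x ^ 2)⁻¹ • g (Real.arctan x) =
      ∫ θ in -(Real.pi / 2)..Real.pi / 2, g θ := by
  have hsubst := integral_image_eq_integral_abs_deriv_smul MeasurableSet.univ
    (fun x _ ↦ (Real.hasDerivAt_arctan' x).hasDerivWithinAt) Real.arctan_injective.injOn g
  have habs (x : ℝ) : |(1 + x ^ 2)⁻¹| = (1 + x ^ 2)⁻¹ := abs_of_pos (by positivity)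
  simp only [Set.image_univ, Real.range_arctan, setIntegral_univ, habs] at hsubst
  rw [← hsubst, intervalIntegral.integral_of_le (by linarith [Real.pi_pos]),
    integral_Ioc_eq_integral_Ioo]

theorem integral_inv_one_add_mul_sq_smul_comp_arctan {β : ℝ} (hβ : 0 < β) (g : ℝ → E) :
    ∫ p : ℝ, (1 + β * p ^ 2)⁻¹ • g (Real.arctan (√β * p)) =
      (√β)⁻¹ • ∫ θ in -(Real.pi / 2)..Real.pi / 2, g θ := by
  have hscale := Measure.integral_comp_mul_left
    (fun x : ℝ ↦ (1 + x ^ 2)⁻¹ • g (Real.arctan x)) √β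
  simpa only [mul_pow, Real.sq_sqrt hβ.le, integral_inv_one_add_sq_smul_comp_arctan,
    abs_of_pos (inv_pos.mpr (Real.sqrt_pos.mpr hβ))] using hscale

end ArctanSubstitution

theorem integral_exp_neg_I_mul_mul_eq_sinc (c r : ℝ) :
    ∫ t in -r..r, Complex.exp (-(Complex.I * c * t)) = 2 * r * Real.sinc (c * r) := by
  rcases eq_or_ne c 0 with rfl | hc
  · simp [two_mul]
  have hkernel (t : ℝ) : -(Complex.I * c * t) = (-c * t : ℝ) * Complex.I := by
    push_cast; ring
  have hc' : (c : ℂ) ≠ 0 := Complex.ofReal_ne_zero.mpr hc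
  simp only [hkernel]
  rw [intervalIntegral.integral_comp_mul_left (fun t : ℝ ↦ Complex.exp (t * Complex.I))
    (neg_ne_zero.mpr hc), mul_neg, integral_exp_mul_I_eq_sinc, neg_mul, Real.sinc_neg,
    Complex.real_smul]
  push_cast
  field_simp

theorem integral_exp_arctan (β a : ℝ) (hβ : 0 < β) :
    ∫ p : ℝ, Complex.exp (-(Complex.I * a * Real.arctan (Real.sqrt β * p)))
        / ((1 + β * p ^ 2 : ℝ) : ℂ)
      = ((Real.pi / Real.sqrt β * sinc (a / 2) : ℝ) : ℂ) := by
  calc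
    _ = ∫ p : ℝ, (1 + β * p ^ 2)⁻¹ •
          Complex.exp (-(Complex.I * a * Real.arctan (√β * p))) := by
      simp only [Complex.real_smul, Complex.ofReal_inv, div_eq_inv_mul]
    _ = (√β)⁻¹ • ∫ θ in -(Real.pi / 2)..Real.pi / 2, Complex.exp (-(Complex.I * a * θ)) :=
      integral_inv_one_add_mul_sq_smul_comp_arctan hβ fun θ ↦ Complex.exp (-(Complex.I * a * θ))
    _ = (√β)⁻¹ • (2 * (Real.pi / 2 : ℝ) * Real.sinc (a * (Real.pi / 2)) : ℂ) := by
      rw [integral_exp_neg_I_mul_mul_eq_sinc]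
    _ = ((Real.pi / √β * sinc (a / 2) : ℝ) : ℂ) := by
      rw [sinc_eq_real_sinc_pi_mul, mul_div_left_comm, Complex.real_smul]
      push_cast
      ring
end

section
/- Let β > 0, ħ > 0, ξ ∈ ℝ. Define the maximal-localization momentum wave function ψ(p) = √(2√β/π)·(1 + βp²)^{−1/2}·e^{−(i/ħ)·ξ·arctan(√β p)/√β}. Then for every q ∈ ℝ and every p ∈ ℝ with βp² ≤ 1, the λ = 1/2 Wigner function of ψ is given by W_{1/2}(ψ, ψ)(q, p) = ((1 − βp²)/(1 + βp²))·sinc(u) + (1/2)·(sinc(1/2 − u) + sinc(1/2 + u)), where u = (q − ξ)/(2ħ√β). -/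
open MeasureTheory

/-- The maximal-localization momentum wave function around position ξ. -/
noncomputable def psiML (β hb ξ : ℝ) (p : ℝ) : ℂ :=
  (Real.sqrt (2 * Real.sqrt β / Real.pi) : ℝ)
    * ((Real.sqrt (1 + β * p ^ 2))⁻¹ : ℝ)
    * Complex.exp (-(Complex.I / hb) * ξ *
        (Real.arctan (Real.sqrt β * p) / Real.sqrt β))

/-!
In the angular coordinate `θ = arctan (√β p)` the operation `⊕` becomes addition, `λ ∘` becomes
multiplication by `λ`, and `μ` becomes `dθ / √β` on `(-π/2, π/2)`. The wave function becomes
`cos θ` times a character, so its Wigner transform is a Fourier integral of a product of two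
cosines, which for `λ = 1/2` is `(cos 2a + cos θ) / 2` with `a = arctan (√β p)`.
The condition `β p² ≤ 1`, that is `|a| ≤ π/4`, keeps both angles `a ± θ/2` inside `(-π/2, π/2)`,
the range on which `arctan` inverts `tan`.
-/

section

open Real hiding sinc
open Set
open Complex (I)

variable {β : ℝ}

/-- The momentum `tan θ / √β` with angular coordinate `θ`. It is defined for every real `θ`, so that
angles may be added freely; `θ ↦ momentum β θ` is injective only on intervals such as
`(-π/2, π/2)`. -/
noncomputable def momentum (β θ : ℝ) : ℝ := tan θ / √β

lemma sqrt_mul_momentum (hβ : 0 < β) (θ : ℝ) : √β * momentum β θ = tan θ :=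
  mul_div_cancel₀ _ (sqrt_pos.2 hβ).ne'

lemma arctan_sqrt_mul_momentum (hβ : 0 < β) {θ : ℝ} (hθ : θ ∈ Ioo (-(π / 2)) (π / 2)) :
    arctan (√β * momentum β θ) = θ := by
  rw [sqrt_mul_momentum hβ, arctan_tan hθ.1 hθ.2]

lemma momentum_arctan_sqrt_mul (hβ : 0 < β) (p : ℝ) : momentum β (arctan (√β * p)) = p := by
  rw [momentum, tan_arctan, mul_div_cancel_left₀ _ (sqrt_pos.2 hβ).ne']

lemma oplus_momentum (hβ : 0 < β) {x y : ℝ} (hx : cos x ≠ 0) (hy : cos y ≠ 0) :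
    oplus β (momentum β x) (momentum β y) = momentum β (x + y) := by
  have hprod : β * momentum β x * momentum β y = tan x * tan y := by
    rw [← sqrt_mul_momentum hβ x, ← sqrt_mul_momentum hβ y]
    linear_combination -(momentum β x * momentum β y) * sq_sqrt hβ.le
  rw [oplus, hprod, momentum, momentum, momentum,
    tan_add' ⟨cos_ne_zero_iff.1 hx, cos_ne_zero_iff.1 hy⟩]
  ring

lemma ominus_momentum (hβ : 0 < β) {x y : ℝ} (hx : cos x ≠ 0) (hy : cos y ≠ 0) :
    ominus β (momentum β x) (momentum β y) = momentum β (x - y) := by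
  have hneg : -momentum β y = momentum β (-y) := by rw [momentum, momentum, tan_neg, neg_div]
  rw [ominus, hneg, oplus_momentum hβ hx (by rwa [cos_neg]), sub_eq_add_neg]

lemma circ_momentum (hβ : 0 < β) (l : ℝ) {θ : ℝ} (hθ : θ ∈ Ioo (-(π / 2)) (π / 2)) :
    circ β l (momentum β θ) = momentum β (l * θ) := by
  rw [circ, arctan_sqrt_mul_momentum hβ hθ, one_div_mul_eq_div, momentum]

lemma integral_gmeasure {E : Type*} [NormedAddCommGroup E] [NormedSpace ℝ E] (hβ : 0 < β)
    (F : ℝ → E) :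
    ∫ p, F p ∂(gmeasure β) = (√β)⁻¹ • ∫ θ in Ioo (-(π / 2)) (π / 2), F (momentum β θ) := by
  have hs : 0 < √β := sqrt_pos.2 hβ
  have himage : (fun p ↦ arctan (√β * p)) '' univ = Ioo (-(π / 2)) (π / 2) := by
    rw [image_univ, ← range_arctan]
    exact (mul_left_surjective₀ hs.ne').range_comp arctan
  have hinj : Function.Injective fun p ↦ arctan (√β * p) :=
    arctan_injective.comp (mul_right_injective₀ hs.ne')
  have hderiv (p : ℝ) :
      HasDerivAt (fun p ↦ arctan (√β * p)) (√β * (1 / (1 + β * p ^ 2))) p := by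
    simpa only [mul_pow, sq_sqrt hβ.le, mul_comm] using (hasDerivAt_const_mul (x := p) √β).arctan
  rw [← himage, integral_image_eq_integral_abs_deriv_smul .univ
      (fun p _ ↦ (hderiv p).hasDerivWithinAt) hinj.injOn, setIntegral_univ, ← integral_smul,
    gmeasure, integral_withDensity_eq_integral_toReal_smul (by fun_prop)
      (.of_forall fun _ ↦ ENNReal.ofReal_lt_top)]
  congr 1 with p
  rw [momentum_arctan_sqrt_mul hβ, abs_of_pos (by positivity), smul_smul,
    inv_mul_cancel_left₀ hs.ne', ENNReal.toReal_ofReal (by positivity)]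

lemma Wig_momentum (hβ : 0 < β) (hb : ℝ) {l : ℝ} (hl : l ∈ Icc 0 1) (φ ψ : ℝ → ℂ) (q : ℝ) {a : ℝ}
    (ha : cos a ≠ 0) :
    Wig β hb l φ ψ q (momentum β a) = (√β)⁻¹ • ∫ θ in Ioo (-(π / 2)) (π / 2),
      (starRingEnd ℂ) (φ (momentum β (a - (1 - l) * θ))) * ψ (momentum β (a + l * θ))
        * Complex.exp (I / hb * q * (θ / √β)) := by
  have hcos {t θ : ℝ} (ht : t ∈ Icc 0 1) (hθ : θ ∈ Ioo (-(π / 2)) (π / 2)) :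
      cos (t * θ) ≠ 0 := by
    have habs : |t * θ| < π / 2 := by
      rw [abs_mul, abs_of_nonneg ht.1]
      exact (mul_le_of_le_one_left (abs_nonneg θ) ht.2).trans_lt (abs_lt.2 hθ)
    exact (cos_pos_of_mem_Ioo (abs_lt.1 habs)).ne'
  rw [Wig, integral_gmeasure hβ]
  congr 1
  refine setIntegral_congr_fun measurableSet_Ioo fun θ hθ ↦ ?_
  simp only [circ_momentum hβ _ hθ, arctan_sqrt_mul_momentum hβ hθ,
    ominus_momentum hβ ha (hcos (Icc.one_sub_mem hl) hθ), oplus_momentum hβ ha (hcos hl hθ)]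

lemma psiML_momentum (hβ : 0 < β) (hb ξ : ℝ) {x : ℝ} (hx : x ∈ Ioo (-(π / 2)) (π / 2)) :
    psiML β hb ξ (momentum β x)
      = √(2 * √β / π) * cos x * Complex.exp (-(I / hb) * ξ * (x / √β)) := by
  have hamp : (√(1 + β * momentum β x ^ 2))⁻¹ = cos x := by
    rw [← inv_sqrt_one_add_tan_sq (cos_pos_of_mem_Ioo hx), ← sqrt_mul_momentum hβ, mul_pow,
      sq_sqrt hβ.le]
  rw [psiML, hamp, arctan_sqrt_mul_momentum hβ hx]

lemma conj_psiML_mul_psiML_momentum (hβ : 0 < β) (hb ξ : ℝ) {x y : ℝ}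
    (hx : x ∈ Ioo (-(π / 2)) (π / 2)) (hy : y ∈ Ioo (-(π / 2)) (π / 2)) :
    (starRingEnd ℂ) (psiML β hb ξ (momentum β x)) * psiML β hb ξ (momentum β y)
      = (2 * √β / π : ℝ) * (cos x * cos y : ℝ)
        * Complex.exp (I / hb * ξ * ((x - y) / √β)) := by
  have hnorm : ((2 * √β / π : ℝ) : ℂ) = √(2 * √β / π) * √(2 * √β / π) := by
    rw [← Complex.ofReal_mul, mul_self_sqrt (by positivity)]
  have hphase : Complex.exp (I / hb * ξ * ((x - y) / √β))
      = Complex.exp (-(-I / hb) * ξ * (x / √β)) * Complex.exp (-(I / hb) * ξ * (y / √β)) := by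
    rw [← Complex.exp_add]
    ring_nf
  rw [psiML_momentum hβ hb ξ hx, psiML_momentum hβ hb ξ hy, hnorm, hphase]
  simp only [map_mul, map_neg, map_div₀, Complex.conj_ofReal, ← Complex.exp_conj, Complex.conj_I,
    Complex.ofReal_mul]
  ring

lemma abs_add_mul_lt {a t θ r : ℝ} (ht₀ : |a| ≤ t * r) (ht₁ : |a| ≤ (1 - t) * r)
    (hθ : |θ| < r) : |a + t * θ| < r := by
  have hr : 0 < r := (abs_nonneg θ).trans_lt hθ
  have ht : 0 ≤ t := nonneg_of_mul_nonneg_left ((abs_nonneg a).trans ht₀) hr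
  refine (abs_add_le a (t * θ)).trans_lt ?_
  rw [abs_mul, abs_of_nonneg ht]
  rcases ht.eq_or_lt with rfl | htpos
  · linarith
  · linarith [mul_lt_mul_of_pos_left hθ htpos]

lemma Wig_psiML_momentum (hβ : 0 < β) (hb ξ q : ℝ) {l a : ℝ} (hl₀ : |a| ≤ l * (π / 2))
    (hl₁ : |a| ≤ (1 - l) * (π / 2)) :
    Wig β hb l (psiML β hb ξ) (psiML β hb ξ) q (momentum β a)
      = 2 / π * ∫ θ in -(π / 2)..π / 2, (cos (a - (1 - l) * θ) * cos (a + l * θ) : ℝ)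
          * Complex.exp (((q - ξ) / (hb * √β) : ℝ) * θ * I) := by
  have hl : l ∈ Icc 0 1 := by
    have hpi : 0 < π / 2 := by positivity
    exact ⟨nonneg_of_mul_nonneg_left ((abs_nonneg a).trans hl₀) hpi,
      sub_nonneg.1 (nonneg_of_mul_nonneg_left ((abs_nonneg a).trans hl₁) hpi)⟩
  have ha : cos a ≠ 0 := (cos_pos_of_mem_Ioo (abs_lt.1 (by linarith [pi_pos]))).ne'
  have hs : (√β : ℂ) ≠ 0 := by exact_mod_cast (sqrt_pos.2 hβ).ne'
  rw [Wig_momentum hβ hb hl _ _ q ha, ← integral_Ioc_eq_integral_Ioo,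
    ← intervalIntegral.integral_of_le (by linarith [pi_pos]), ← intervalIntegral.integral_smul,
    ← intervalIntegral.integral_const_mul]
  refine intervalIntegral.integral_congr_Ioo_of_le (by linarith [pi_pos]) fun θ hθ ↦ ?_
  have hx : a - (1 - l) * θ ∈ Ioo (-(π / 2)) (π / 2) := by
    rw [sub_eq_add_neg, ← mul_neg]
    exact abs_lt.1 (abs_add_mul_lt hl₁ (by rwa [sub_sub_cancel]) (by rwa [abs_neg, abs_lt]))
  have hy : a + l * θ ∈ Ioo (-(π / 2)) (π / 2) :=
    abs_lt.1 (abs_add_mul_lt hl₀ hl₁ (abs_lt.2 hθ))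
  have hphase : Complex.exp (((q - ξ) / (hb * √β) : ℝ) * θ * I)
      = Complex.exp (I / hb * ξ * (((a - (1 - l) * θ : ℝ) - (a + l * θ : ℝ)) / √β))
        * Complex.exp (I / hb * q * (θ / √β)) := by
    rw [← Complex.exp_add]
    push_cast
    ring_nf
  simp only [conj_psiML_mul_psiML_momentum hβ hb ξ hx hy, hphase]
  rw [Complex.real_smul]
  push_cast
  field_simp

lemma integral_exp_mul_mul_I (c r : ℝ) :
    ∫ θ in -r..r, Complex.exp (c * θ * I) = (2 * r * Real.sinc (c * r) : ℝ) := by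
  rcases eq_or_ne c 0 with rfl | hc
  · simp [two_mul]
  have hscale := intervalIntegral.integral_comp_mul_left (a := -r) (b := r)
    (fun t : ℝ ↦ Complex.exp (t * I)) hc
  have hc' : (c : ℂ) ≠ 0 := by exact_mod_cast hc
  push_cast at hscale
  rw [hscale, mul_neg, integral_exp_mul_I_eq_sinc, Complex.real_smul]
  push_cast
  field_simp

lemma integral_cos_mul_exp_mul_I (k c r : ℝ) :
    ∫ θ in -r..r, cos (k * θ) * Complex.exp (c * θ * I)
      = (r * (Real.sinc ((k - c) * r) + Real.sinc ((k + c) * r)) : ℝ) := by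
  have hsplit (θ : ℝ) : cos (k * θ) * Complex.exp (c * θ * I)
      = (1 / 2) * (Complex.exp ((c - k : ℝ) * θ * I) + Complex.exp ((k + c : ℝ) * θ * I)) := by
    push_cast
    rw [Complex.cos, div_mul_eq_mul_div, add_mul, ← Complex.exp_add, ← Complex.exp_add]
    ring_nf
  simp_rw [hsplit]
  rw [intervalIntegral.integral_const_mul, intervalIntegral.integral_add
      (Continuous.intervalIntegrable (by fun_prop) _ _)
      (Continuous.intervalIntegrable (by fun_prop) _ _),
    integral_exp_mul_mul_I, integral_exp_mul_mul_I, ← neg_sub k c, neg_mul, Real.sinc_neg]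
  push_cast
  ring

lemma sinc_eq_real_sinc (x : ℝ) : sinc x = Real.sinc (π * x) := by
  simp [sinc, Real.sinc, pi_ne_zero]

lemma Wig_half_psiML_momentum (hβ : 0 < β) (hb ξ q : ℝ) {a : ℝ} (ha : |a| ≤ π / 4) :
    Wig β hb (1 / 2) (psiML β hb ξ) (psiML β hb ξ) q (momentum β a)
      = (cos (2 * a) * sinc ((q - ξ) / (2 * hb * √β))
          + (1 / 2) * (sinc (1 / 2 - (q - ξ) / (2 * hb * √β))
            + sinc (1 / 2 + (q - ξ) / (2 * hb * √β))) : ℝ) := by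
  set u := (q - ξ) / (2 * hb * √β) with hu
  have hfreq : (q - ξ) / (hb * √β) = 2 * u := by
    rw [hu]
    ring
  have hprod (θ : ℝ) : cos (a - (1 - 1 / 2) * θ) * cos (a + 1 / 2 * θ)
      = (cos (2 * a) + cos (1 * θ)) / 2 := by
    rw [cos_add_cos]
    ring_nf
  have hpi : (π : ℂ) ≠ 0 := by exact_mod_cast pi_ne_zero
  calc Wig β hb (1 / 2) (psiML β hb ξ) (psiML β hb ξ) q (momentum β a)
      = 2 / π * ∫ θ in -(π / 2)..π / 2,
          ((cos (2 * a) / 2 : ℝ) * Complex.exp ((2 * u : ℝ) * θ * I)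
            + (1 / 2 : ℝ) * (cos (1 * θ) * Complex.exp ((2 * u : ℝ) * θ * I))) := by
        rw [Wig_psiML_momentum hβ hb ξ q (by linarith) (by linarith), hfreq]
        congr 2 with θ
        rw [hprod]
        push_cast
        ring
    _ = (cos (2 * a) * Real.sinc (2 * u * (π / 2))
          + (1 / 2) * (Real.sinc ((1 - 2 * u) * (π / 2))
            + Real.sinc ((1 + 2 * u) * (π / 2))) : ℝ) := by
        rw [intervalIntegral.integral_add (Continuous.intervalIntegrable (by fun_prop) _ _)
            (Continuous.intervalIntegrable (by fun_prop) _ _),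
          intervalIntegral.integral_const_mul, intervalIntegral.integral_const_mul,
          integral_exp_mul_mul_I, integral_cos_mul_exp_mul_I]
        push_cast
        field_simp
    _ = _ := by
        simp only [sinc_eq_real_sinc]
        ring_nf

lemma abs_arctan_le_pi_div_four {x : ℝ} (hx : |x| ≤ 1) : |arctan x| ≤ π / 4 := by
  rw [abs_le, ← arctan_one, ← arctan_neg]
  exact (abs_le.1 hx).imp (arctan_mono ·) (arctan_mono ·)

lemma cos_two_mul_arctan (x : ℝ) : cos (2 * arctan x) = (1 - x ^ 2) / (1 + x ^ 2) := by
  have hden : 1 + x ^ 2 ≠ 0 := by positivity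
  rw [cos_two_mul, cos_sq_arctan]
  field_simp
  ring

end

theorem wigner_maximal_localization (β hb ξ : ℝ) (hβ : 0 < β) (hhb : 0 < hb)
    (q p : ℝ) (hp : β * p ^ 2 ≤ 1) :
    Wig β hb (1 / 2) (psiML β hb ξ) (psiML β hb ξ) q p
      = (((1 - β * p ^ 2) / (1 + β * p ^ 2)
            * sinc ((q - ξ) / (2 * hb * Real.sqrt β))
          + (1 / 2) * (sinc (1 / 2 - (q - ξ) / (2 * hb * Real.sqrt β))
            + sinc (1 / 2 + (q - ξ) / (2 * hb * Real.sqrt β))) : ℝ) : ℂ) := by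
  have hsq : (√β * p) ^ 2 = β * p ^ 2 := by rw [mul_pow, Real.sq_sqrt hβ.le]
  have habs : |Real.arctan (√β * p)| ≤ Real.pi / 4 :=
    abs_arctan_le_pi_div_four ((sq_le_one_iff_abs_le_one _).1 (hsq.trans_le hp))
  have hW := Wig_half_psiML_momentum hβ hb ξ q habs
  rwa [momentum_arctan_sqrt_mul hβ, cos_two_mul_arctan, hsq] at hW
end
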